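/- arXiv:2009.02664 — 2 statements merged into one kernel-verified Lean document; each statement's English description precedes it below -/
import Mathlib

section
/- If G is a nontrivial connected graph and B is a block of G for which srd(B) is maximum among all blocks of G, then srd(G) = srd(B). -/
open SimpleGraph

/-- `F` is an edge-cut of `G` separating `u` and `v`. -/
def CutsBetween {V : Type*} (G : SimpleGraph V) (u v : V) (F : Finset (Sym2 V)) : Prop :=
  ↑F ⊆ G.edgeSet ∧ ¬ (G.deleteEdges ↑F).Reachable u v

/-- `lam G u v` is the minimum number of edges in an edge-cut of `G` separating `u` and `v`. -/
noncomputable def lam {V : Type*} (G : SimpleGraph V) (u v : V) : ℕ :=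
  sInf {n | ∃ F : Finset (Sym2 V), CutsBetween G u v F ∧ F.card = n}

/-- `c` is a strong rainbow disconnection coloring of `G`: every pair of distinct vertices
admits a rainbow minimum edge-cut separating them. -/
def IsSRDColoring {V : Type*} (G : SimpleGraph V) (c : Sym2 V → ℕ) : Prop :=
  ∀ u v : V, u ≠ v → ∃ F : Finset (Sym2 V),
    CutsBetween G u v F ∧ F.card = lam G u v ∧ Set.InjOn c ↑F

/-- The strong rainbow disconnection number of `G`. -/
noncomputable def srd {V : Type*} (G : SimpleGraph V) : ℕ :=
  sInf {k | ∃ c : Sym2 V → ℕ, (∀ e ∈ G.edgeSet, c e < k) ∧ IsSRDColoring G c}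

/-- `B` is a block of `G`: a maximal connected subgraph without cut-vertices. -/
def IsBlock {V : Type*} (G : SimpleGraph V) (B : G.Subgraph) : Prop :=
  B.verts.Nonempty ∧ B.coe.Connected ∧
  (∀ v : B.verts, (B.coe.induce {w | w ≠ v}).Preconnected) ∧
  ∀ B' : G.Subgraph, B ≤ B' → B'.coe.Connected →
    (∀ v : B'.verts, (B'.coe.induce {w | w ≠ v}).Preconnected) → B = B'

/-- `H` is a cycle graph: connected and 2-regular. -/
def IsCycleGraph {W : Type*} (H : SimpleGraph W) : Prop :=
  H.Connected ∧ ∀ v : W, Nat.card (H.neighborSet v) = 2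

/-!
Let `B` be a block. Deleting its edges leaves no path between two distinct vertices of `B`, so every
vertex `u` is attached to `B` at one vertex at most, its gate. Consequently an edge-cut of `B`
separating the gates of `u` and `v` is an edge-cut of `G` separating `u` and `v`. Conversely,
following a `u`-`v` path from block to block shows that an edge-cut separating `u` and `v`
separates their gates in some block, and then its edges in that block alone suffice. So the minimum
cuts of `G` may be taken inside single blocks, a coloring is a strong rainbow disconnection coloring
if and only if its restriction to every block is one, and since blocks share no edges, colorings of
the blocks can be glued.
-/

section

variable {V : Type*} {G : SimpleGraph V}

/-! ### Nonseparable subgraphs and blocks -/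

/-- Nonseparable subgraphs, i.e. nonempty connected ones without cut-vertices. Connectedness is the
case `S = ∅` and the absence of cut-vertices the case of singletons. -/
def Nonseparable (H : G.Subgraph) : Prop :=
  H.verts.Nonempty ∧ ∀ S : Set V, S.Subsingleton → (H.deleteVerts S).Preconnected

lemma preconnected_deleteVerts_singleton_iff {H : G.Subgraph} (v : H.verts) :
    (H.deleteVerts {v.1}).Preconnected ↔ (H.coe.induce {w | w ≠ v}).Preconnected := by
  let e : (H.deleteVerts {v.1}).coe ≃g H.coe.induce {w | w ≠ v} :=
    { toFun := fun w => ⟨⟨w, w.2.1⟩, fun h => w.2.2 (congrArg Subtype.val h)⟩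
      invFun := fun w => ⟨w.1, w.1.2, fun h => w.2 (Subtype.ext h)⟩
      map_rel_iff' := fun {x y} => ⟨fun hadj => ⟨x.2, y.2, hadj⟩, fun hadj => hadj.2.2⟩ }
  rw [Subgraph.preconnected_iff, e.preconnected_iff]

lemma deleteVerts_eq_self_of_disjoint {H : G.Subgraph} {S : Set V} (h : Disjoint H.verts S) :
    H.deleteVerts S = H := by
  rw [← Subgraph.deleteVerts_inter_verts_left_eq, h.inter_eq, Subgraph.deleteVerts_empty]

lemma nonseparable_iff {H : G.Subgraph} :
    Nonseparable H ↔ H.verts.Nonempty ∧ H.coe.Connected ∧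
      ∀ v : H.verts, (H.coe.induce {w | w ≠ v}).Preconnected := by
  refine and_congr_right fun hne => ?_
  simp_rw [← preconnected_deleteVerts_singleton_iff, ← Subgraph.connected_iff',
    Subgraph.connected_iff, and_iff_left hne]
  refine ⟨fun h => ⟨?_, fun v => h _ Set.subsingleton_singleton⟩, fun ⟨hH, hv⟩ S hS => ?_⟩
  · simpa only [Subgraph.deleteVerts_empty] using h ∅ Set.subsingleton_empty
  · by_cases hdisj : Disjoint H.verts S
    · rwa [deleteVerts_eq_self_of_disjoint hdisj]
    · obtain ⟨v, hvH, hvS⟩ := Set.not_disjoint_iff.1 hdisj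
      rw [hS.eq_singleton_of_mem hvS]
      exact hv ⟨v, hvH⟩

lemma isBlock_iff_maximal_nonseparable {B : G.Subgraph} :
    IsBlock G B ↔ Maximal Nonseparable B := by
  constructor
  · rintro ⟨hne, hconn, hcut, hmax⟩
    refine ⟨nonseparable_iff.2 ⟨hne, hconn, hcut⟩, fun B' hB' hle => ?_⟩
    obtain ⟨-, hconn', hcut'⟩ := nonseparable_iff.1 hB'
    exact (hmax B' hle hconn' hcut').ge
  · intro hB
    obtain ⟨hne, hconn, hcut⟩ := nonseparable_iff.1 hB.prop
    exact ⟨hne, hconn, hcut, fun B' hle hconn' hcut' =>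
      hB.eq_of_le (nonseparable_iff.2 ⟨hne.mono hle.1, hconn', hcut'⟩) hle⟩

lemma le_deleteVerts_iff {H K : G.Subgraph} {S : Set V} :
    K ≤ H.deleteVerts S ↔ K ≤ H ∧ Disjoint K.verts S := by
  refine ⟨fun h => ⟨h.trans Subgraph.deleteVerts_le, ?_⟩, fun ⟨hle, hS⟩ => ?_⟩
  · exact Set.disjoint_left.2 fun x hx => (h.1 hx).2
  · rw [← deleteVerts_eq_self_of_disjoint hS]
    exact Subgraph.deleteVerts_mono hle

lemma preconnected_of_forall_exists_walk {H H' : G.Subgraph} (hH : H.Preconnected) (hle : H ≤ H')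
    (h : ∀ w ∈ H'.verts, ∃ s ∈ H.verts, ∃ p : G.Walk w s, p.toSubgraph ≤ H') :
    H'.Preconnected := by
  rw [Subgraph.preconnected_iff_forall_exists_walk_subgraph] at hH ⊢
  intro u v hu hv
  obtain ⟨s, hs, p, hp⟩ := h u hu
  obtain ⟨t, ht, q, hq⟩ := h v hv
  obtain ⟨r, hr⟩ := hH hs ht
  refine ⟨(p.append r).append q.reverse, ?_⟩
  simp only [Walk.toSubgraph_append, Walk.toSubgraph_reverse, sup_le_iff]
  exact ⟨⟨hp, hr.trans hle⟩, hq⟩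

lemma Nonseparable.extend {H H' : G.Subgraph} (hH : Nonseparable H) (hle : H ≤ H')
    (h : ∀ S : Set V, S.Subsingleton → ∀ w ∈ H'.verts, w ∉ S →
      ∃ s ∈ H.verts, ∃ p : G.Walk w s, p.toSubgraph ≤ H'.deleteVerts S) :
    Nonseparable H' := by
  refine ⟨hH.1.mono hle.1, fun S hS => ?_⟩
  refine preconnected_of_forall_exists_walk (hH.2 S hS) (Subgraph.deleteVerts_mono hle) ?_
  rintro w ⟨hw, hwS⟩
  obtain ⟨s, hs, p, hp⟩ := h S hS w hw hwS
  exact ⟨s, ⟨hs, (hp.1 p.end_mem_verts_toSubgraph).2⟩, p, hp⟩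

lemma Nonseparable.sup {H K : G.Subgraph} (hH : Nonseparable H) (hK : Nonseparable K)
    (hHK : (H.verts ∩ K.verts).Nontrivial) : Nonseparable (H ⊔ K) := by
  refine hH.extend le_sup_left fun S hS w hw hwS => ?_
  rcases hw with hwH | hwK
  · exact ⟨w, hwH, .nil, by simpa using ⟨Or.inl hwH, hwS⟩⟩
  · obtain ⟨s, ⟨hsH, hsK⟩, hsS⟩ : ∃ s ∈ H.verts ∩ K.verts, s ∉ S :=
      Set.not_subset.1 fun hsub => hHK.not_subsingleton (hS.anti hsub)
    obtain ⟨p, hp⟩ := (Subgraph.preconnected_iff_forall_exists_walk_subgraph _).1 (hK.2 S hS)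
      (u := w) (v := s) ⟨hwK, hwS⟩ ⟨hsK, hsS⟩
    exact ⟨s, hsH, p, hp.trans (Subgraph.deleteVerts_mono le_sup_right)⟩

lemma eq_of_mem_support_takeUntil_of_mem_support_dropUntil [DecidableEq V] {a b w x : V}
    {p : G.Walk a b} (hp : p.IsPath) (hw : w ∈ p.support)
    (hx : x ∈ (p.takeUntil w hw).support) (hx' : x ∈ (p.dropUntil w hw).support) : x = w := by
  have hnodup := hp.support_nodup
  rw [← p.take_spec hw, Walk.support_append] at hnodup
  rw [← Walk.cons_tail_support, List.mem_cons] at hx'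
  exact hx'.resolve_right ((List.nodup_append'.1 hnodup).2.2 hx)

lemma Nonseparable.sup_toSubgraph_of_isPath {H : G.Subgraph} (hH : Nonseparable H) {a b : V}
    (ha : a ∈ H.verts) (hb : b ∈ H.verts) {p : G.Walk a b} (hp : p.IsPath) :
    Nonseparable (H ⊔ p.toSubgraph) := by
  classical
  refine hH.extend le_sup_left fun S hS w hw hwS => ?_
  rcases hw with hwH | hwp
  · exact ⟨w, hwH, .nil, by simpa using ⟨Or.inl hwH, hwS⟩⟩
  have hw : w ∈ p.support := p.mem_verts_toSubgraph.1 hwp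
  have hsplit : (p.takeUntil w hw).toSubgraph ⊔ (p.dropUntil w hw).toSubgraph = p.toSubgraph := by
    rw [← Walk.toSubgraph_append, p.take_spec hw]
  by_cases htake : Disjoint (p.takeUntil w hw).toSubgraph.verts S
  · refine ⟨a, ha, (p.takeUntil w hw).reverse, ?_⟩
    rw [Walk.toSubgraph_reverse, le_deleteVerts_iff]
    exact ⟨(le_sup_left.trans hsplit.le).trans le_sup_right, htake⟩
  · obtain ⟨x, hxtake, hxS⟩ := Set.not_disjoint_iff.1 htake
    refine ⟨b, hb, p.dropUntil w hw, le_deleteVerts_iff.2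
      ⟨(le_sup_right.trans hsplit.le).trans le_sup_right, Set.disjoint_left.2 fun y hy hyS => ?_⟩⟩
    obtain rfl : y = x := hS hyS hxS
    rw [Walk.mem_verts_toSubgraph] at hxtake hy
    obtain rfl := eq_of_mem_support_takeUntil_of_mem_support_dropUntil hp hw hxtake hy
    exact hwS hxS

lemma nonseparable_subgraphOfAdj {x y : V} (h : G.Adj x y) :
    Nonseparable (G.subgraphOfAdj h) := by
  refine ⟨⟨x, by simp⟩, fun S _ => ?_⟩
  by_cases hS : Disjoint (G.subgraphOfAdj h).verts S
  · rw [deleteVerts_eq_self_of_disjoint hS]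
    exact (Subgraph.subgraphOfAdj_connected h).preconnected
  · have hsub : ((G.subgraphOfAdj h).deleteVerts S).verts.Subsingleton := by
      rintro u ⟨hu, huS⟩ v ⟨hv, hvS⟩
      simp only [subgraphOfAdj_verts, Set.disjoint_insert_left, Set.disjoint_singleton_left,
        Set.mem_insert_iff, Set.mem_singleton_iff] at hS hu hv
      grind
    exact ⟨fun u v => (hsub.coe_sort.elim u v) ▸ .refl _⟩

lemma nonseparable_sSup {c : Set G.Subgraph} (hne : c.Nonempty) (hchain : IsChain (· ≤ ·) c)
    (hc : ∀ H ∈ c, Nonseparable H) : Nonseparable (sSup c) := by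
  obtain ⟨K, hK⟩ := hne
  refine ⟨(hc K hK).1.mono (le_sSup hK).1, fun S hS => ?_⟩
  rw [Subgraph.preconnected_iff_forall_exists_walk_subgraph]
  rintro u v ⟨hu, huS⟩ ⟨hv, hvS⟩
  simp only [Subgraph.verts_sSup, Set.mem_iUnion] at hu hv
  obtain ⟨H₁, hH₁, hu⟩ := hu
  obtain ⟨H₂, hH₂, hv⟩ := hv
  obtain ⟨H, hH, hle₁, hle₂⟩ := hchain.directedOn H₁ hH₁ H₂ hH₂
  obtain ⟨p, hp⟩ := (Subgraph.preconnected_iff_forall_exists_walk_subgraph _).1 ((hc H hH).2 S hS)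
    (u := u) (v := v) ⟨hle₁.1 hu, huS⟩ ⟨hle₂.1 hv, hvS⟩
  exact ⟨p, hp.trans (Subgraph.deleteVerts_mono (le_sSup hH))⟩

lemma exists_isBlock_adj {x y : V} (h : G.Adj x y) : ∃ B : G.Subgraph, IsBlock G B ∧ B.Adj x y := by
  obtain ⟨B, hle, hB⟩ := zorn_le_nonempty₀ {H : G.Subgraph | Nonseparable H}
    (fun c hc hchain H hH => ⟨sSup c, nonseparable_sSup ⟨H, hH⟩ hchain hc, fun _ => le_sSup⟩)
    _ (nonseparable_subgraphOfAdj h)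
  exact ⟨B, isBlock_iff_maximal_nonseparable.2 hB, hle.2 (by simp)⟩

variable {B C : G.Subgraph}

lemma IsBlock.eq_of_mem_edgeSet (hB : IsBlock G B) (hC : IsBlock G C) {e : Sym2 V}
    (heB : e ∈ B.edgeSet) (heC : e ∈ C.edgeSet) : B = C := by
  rw [isBlock_iff_maximal_nonseparable] at hB hC
  induction e with | _ x y
  rw [Subgraph.mem_edgeSet] at heB heC
  have hsup : Nonseparable (B ⊔ C) := hB.prop.sup hC.prop
    ⟨x, ⟨heB.fst_mem, heC.fst_mem⟩, y, ⟨heB.snd_mem, heC.snd_mem⟩, heB.ne⟩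
  exact (hB.eq_of_le hsup le_sup_left).trans (hC.eq_of_le hsup le_sup_right).symm

/-- A path outside `B` between distinct vertices of `B` could be added to `B`. -/
lemma IsBlock.eq_of_reachable_deleteEdges (hB : IsBlock G B) {a b : V} (ha : a ∈ B.verts)
    (hb : b ∈ B.verts) (h : (G.deleteEdges B.edgeSet).Reachable a b) : a = b := by
  rw [isBlock_iff_maximal_nonseparable] at hB
  obtain ⟨p, hp⟩ := h.exists_isPath
  have hle : (p.mapLe (deleteEdges_le _)).toSubgraph ≤ B :=
    le_sup_right.trans
      (hB.le_of_ge (hB.prop.sup_toSubgraph_of_isPath ha hb ((Walk.isPath_mapLe _).2 hp))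
        le_sup_left)
  cases p with
  | nil => rfl
  | cons hadj p => exact absurd (hle.2 (by simp)) (deleteEdges_adj.1 hadj).2

lemma IsBlock.reachable_deleteEdges_of_ne (hB : IsBlock G B) (hC : IsBlock G C) (hBC : B ≠ C)
    {x y : V} (hx : x ∈ B.verts) (hy : y ∈ B.verts) :
    (G.deleteEdges C.edgeSet).Reachable x y := by
  let f : B.coe →g G.deleteEdges C.edgeSet :=
    { toFun := Subtype.val
      map_rel' := fun hadj => deleteEdges_adj.2
        ⟨B.adj_sub hadj, fun hadjC => hBC (hB.eq_of_mem_edgeSet hC hadj hadjC)⟩ }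
  exact (hB.2.1.preconnected ⟨x, hx⟩ ⟨y, hy⟩).map f

/-! ### Gates -/

/-- `a` is a gate of `u` in `B`: a vertex at which `u` is attached to `B` once the edges of `B` are
deleted. -/
def IsGate (B : G.Subgraph) (u : V) (a : B.verts) : Prop :=
  (G.deleteEdges B.edgeSet).Reachable u a

lemma exists_isGate_walk_length_le {v w : V} (p : G.Walk v w) (hw : w ∈ B.verts) :
    ∃ b : B.verts, IsGate B v b ∧ ∃ q : G.Walk v b, q.length ≤ p.length := by
  induction p with
  | nil => exact ⟨⟨_, hw⟩, .refl _, .nil, le_rfl⟩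
  | @cons v x _ hvx p ih =>
    by_cases hv : v ∈ B.verts
    · exact ⟨⟨v, hv⟩, .refl _, .nil, Nat.zero_le _⟩
    · obtain ⟨b, hxb, q, hq⟩ := ih hw
      have hvx' : (G.deleteEdges B.edgeSet).Adj v x :=
        deleteEdges_adj.2 ⟨hvx, fun hadj => hv (B.edge_vert hadj)⟩
      exact ⟨b, hvx'.reachable.trans hxb, q.cons hvx, Nat.succ_le_succ hq⟩

lemma exists_isBlock_isGate_not_reachable (H : SimpleGraph V) {u v : V} (p : G.Walk u v)
    (huv : ¬ H.Reachable u v) :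
    ∃ B : G.Subgraph, IsBlock G B ∧ ∃ a b : B.verts,
      IsGate B u a ∧ IsGate B v b ∧ ¬ H.Reachable a b := by
  induction hn : p.length using Nat.strong_induction_on generalizing u with | _ n ih
  cases p with
  | nil => exact absurd (.refl _) huv
  | @cons _ w _ huw p =>
    obtain ⟨B, hB, hadj⟩ := exists_isBlock_adj huw
    obtain ⟨b, hvb, q, hq⟩ := exists_isGate_walk_length_le p.reverse hadj.snd_mem
    by_cases hub : H.Reachable u b
    · have hlt : q.reverse.length < n := by simp at hq hn ⊢; lia
      obtain ⟨C, hC, a, b', hba, hvb', hab⟩ :=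
        ih _ hlt q.reverse (fun hbv => huv (hub.trans hbv)) rfl
      have hBC : B ≠ C := by
        rintro rfl
        have hba' : b.1 = a := hB.eq_of_reachable_deleteEdges b.2 a.2 hba
        have hbb' : b.1 = b' := hB.eq_of_reachable_deleteEdges b.2 b'.2 (hvb.symm.trans hvb')
        exact hab (hba' ▸ hbb' ▸ .refl _)
      exact ⟨C, hC, a, b',
        (hB.reachable_deleteEdges_of_ne hC hBC hadj.fst_mem b.2).trans hba, hvb', hab⟩
    · exact ⟨B, hB, ⟨u, hadj.fst_mem⟩, b, .refl _, hvb, hub⟩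

/-! ### Edge-cuts of a graph and of its blocks -/

/-- The edges of `G` given by a set of edges of the graph `B.coe`, whose vertices form a subtype. -/
def liftEdges (B : G.Subgraph) (F : Finset (Sym2 B.verts)) : Finset (Sym2 V) :=
  F.map (Function.Embedding.subtype _).sym2Map

lemma mem_liftEdges {F : Finset (Sym2 B.verts)} {e : Sym2 V} :
    e ∈ liftEdges B F ↔ ∃ f ∈ F, f.map Subtype.val = e :=
  Finset.mem_map

lemma card_liftEdges (F : Finset (Sym2 B.verts)) : (liftEdges B F).card = F.card :=
  Finset.card_map _

lemma map_val_mem_edgeSet_iff {f : Sym2 B.verts} :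
    f.map Subtype.val ∈ B.edgeSet ↔ f ∈ B.coe.edgeSet := by
  induction f with | _ x y
  rfl

lemma IsGate.exists_isGate_reachable (hB : IsBlock G B) {F : Finset (Sym2 B.verts)} {u x : V}
    {a : B.verts} (ha : IsGate B u a) (h : (G.deleteEdges ↑(liftEdges B F)).Reachable u x) :
    ∃ a' : B.verts, IsGate B x a' ∧ (B.coe.deleteEdges ↑F).Reachable a a' := by
  rw [reachable_iff_reflTransGen] at h
  induction h with
  | refl => exact ⟨a, ha, .refl _⟩
  | @tail y z _ hyz ih =>
    obtain ⟨a', hya', haa'⟩ := ih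
    obtain ⟨hG, hF⟩ := deleteEdges_adj.1 hyz
    by_cases hadj : B.Adj y z
    · obtain rfl : a' = ⟨y, hadj.fst_mem⟩ :=
        Subtype.ext (hB.eq_of_reachable_deleteEdges hadj.fst_mem a'.2 hya').symm
      have hstep : (B.coe.deleteEdges ↑F).Adj ⟨y, hadj.fst_mem⟩ ⟨z, hadj.snd_mem⟩ :=
        deleteEdges_adj.2 ⟨hadj, fun hmem => hF (mem_liftEdges.2 ⟨_, hmem, rfl⟩)⟩
      exact ⟨⟨z, hadj.snd_mem⟩, .refl _, haa'.trans hstep.reachable⟩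
    · have hstep : (G.deleteEdges B.edgeSet).Adj z y := (deleteEdges_adj.2 ⟨hG, hadj⟩).symm
      exact ⟨a', hstep.reachable.trans hya', haa'⟩

lemma CutsBetween.liftEdges (hB : IsBlock G B) {u v : V} {a b : B.verts} (ha : IsGate B u a)
    (hb : IsGate B v b) {F : Finset (Sym2 B.verts)} (hF : CutsBetween B.coe a b F) :
    CutsBetween G u v (liftEdges B F) := by
  refine ⟨fun e he => ?_, fun huv => hF.2 ?_⟩
  · obtain ⟨f, hf, rfl⟩ := mem_liftEdges.1 he
    exact B.edgeSet_subset (map_val_mem_edgeSet_iff.2 (hF.1 hf))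
  · obtain ⟨b', hb', hab'⟩ := ha.exists_isGate_reachable hB huv
    obtain rfl : b' = b :=
      Subtype.ext (hB.eq_of_reachable_deleteEdges b'.2 b.2 (hb'.symm.trans hb))
    exact hab'

lemma exists_cutsBetween_coe {a b : B.verts} {F : Finset (Sym2 V)}
    (h : ¬ (G.deleteEdges ↑F).Reachable a.1 b.1) :
    ∃ F' : Finset (Sym2 B.verts), CutsBetween B.coe a b F' ∧ liftEdges B F' ⊆ F := by
  classical
  let F' := (F.preimage (Sym2.map Subtype.val)
    (Sym2.map.injective Subtype.val_injective).injOn).filter (· ∈ B.coe.edgeSet)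
  have hF' {f : Sym2 B.verts} : f ∈ F' ↔ f.map Subtype.val ∈ F ∧ f ∈ B.coe.edgeSet := by
    simp [F']
  refine ⟨F', ⟨fun f hf => (hF'.1 hf).2, fun hab => h ?_⟩, fun e he => ?_⟩
  · let φ : B.coe.deleteEdges ↑F' →g G.deleteEdges ↑F :=
      { toFun := Subtype.val
        map_rel' := fun hadj => by
          rw [deleteEdges_adj] at hadj ⊢
          exact ⟨B.adj_sub hadj.1, fun hmem => hadj.2 (hF'.2 ⟨hmem, hadj.1⟩)⟩ }
    exact hab.map φ
  · obtain ⟨f, hf, rfl⟩ := mem_liftEdges.1 he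
    exact (hF'.1 hf).1

lemma cutsBetween_empty {u v : V} (h : ¬ G.Reachable u v) : CutsBetween G u v ∅ :=
  ⟨by simp, fun huv => h (huv.mono (deleteEdges_le _))⟩

lemma lam_le_card {u v : V} {F : Finset (Sym2 V)} (hF : CutsBetween G u v F) :
    lam G u v ≤ F.card :=
  Nat.sInf_le ⟨F, hF, rfl⟩

lemma CutsBetween.exists_card_eq_lam {u v : V} {F : Finset (Sym2 V)} (hF : CutsBetween G u v F) :
    ∃ M : Finset (Sym2 V), CutsBetween G u v M ∧ M.card = lam G u v :=
  Nat.sInf_mem (s := {n | ∃ M : Finset (Sym2 V), CutsBetween G u v M ∧ M.card = n}) ⟨_, F, hF, rfl⟩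

lemma lam_coe_eq_of_isGate (hB : IsBlock G B) {u v : V} {a b : B.verts} (ha : IsGate B u a)
    (hb : IsGate B v b) {M : Finset (Sym2 V)} (hM : M.card = lam G u v)
    (hab : ¬ (G.deleteEdges ↑M).Reachable a.1 b.1) : lam B.coe a b = lam G u v := by
  obtain ⟨F, hF, hFM⟩ := exists_cutsBetween_coe hab
  obtain ⟨N, hN, hNcard⟩ := hF.exists_card_eq_lam
  apply le_antisymm
  · calc lam B.coe a b ≤ F.card := lam_le_card hF
      _ = (liftEdges B F).card := (card_liftEdges F).symm
      _ ≤ M.card := Finset.card_le_card hFM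
      _ = lam G u v := hM
  · calc lam G u v ≤ (liftEdges B N).card := lam_le_card (hN.liftEdges hB ha hb)
      _ = N.card := card_liftEdges N
      _ = lam B.coe a b := hNcard

/-! ### Colorings -/

lemma IsSRDColoring.congr {c d : Sym2 V → ℕ} (hc : IsSRDColoring G c)
    (hcd : Set.EqOn c d G.edgeSet) : IsSRDColoring G d := by
  intro u v huv
  obtain ⟨F, hF, hcard, hinj⟩ := hc u v huv
  exact ⟨F, hF, hcard, hinj.congr (hcd.mono hF.1)⟩

lemma IsSRDColoring.comp_map_val {c : Sym2 V → ℕ} (hc : IsSRDColoring G c) (hB : IsBlock G B) :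
    IsSRDColoring B.coe (c ∘ Sym2.map Subtype.val) := by
  intro a b hab
  obtain ⟨M, hM, hMcard, hinj⟩ := hc a b (Subtype.val_injective.ne hab)
  obtain ⟨F, hF, hFM⟩ := exists_cutsBetween_coe hM.2
  have hlam : lam B.coe a b = lam G a b :=
    lam_coe_eq_of_isGate hB (.refl _) (.refl _) hMcard hM.2
  refine ⟨F, hF, (lam_le_card hF).antisymm' ?_, ?_⟩
  · rw [hlam, ← hMcard, ← card_liftEdges]
    exact Finset.card_le_card hFM
  · exact hinj.comp (Sym2.map.injective Subtype.val_injective).injOn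
      fun f hf => hFM (mem_liftEdges.2 ⟨f, hf, rfl⟩)

lemma injOn_liftEdges {c : Sym2 V → ℕ} {F : Finset (Sym2 B.verts)}
    (h : Set.InjOn (c ∘ Sym2.map Subtype.val) (F : Set (Sym2 B.verts))) :
    Set.InjOn c ↑(liftEdges B F) := by
  rw [liftEdges, Finset.coe_map]
  exact h.image_of_comp

lemma exists_cutsBetween_of_forall_isBlock {c : Sym2 V → ℕ}
    (hc : ∀ B : G.Subgraph, IsBlock G B → IsSRDColoring B.coe (c ∘ Sym2.map Subtype.val))
    {u v : V} (huv : u ≠ v) : ∃ F : Finset (Sym2 V), CutsBetween G u v F := by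
  by_cases h : G.Reachable u v
  · obtain ⟨p⟩ := h
    obtain ⟨B, hB, a, b, ha, hb, hab⟩ :=
      exists_isBlock_isGate_not_reachable ⊥ p (reachable_bot.not.2 huv)
    obtain ⟨F, hF, -⟩ := hc B hB a b fun hab' => hab (hab' ▸ .refl _)
    exact ⟨_, hF.liftEdges hB ha hb⟩
  · exact ⟨∅, cutsBetween_empty h⟩

lemma isSRDColoring_of_forall_isBlock {c : Sym2 V → ℕ}
    (hc : ∀ B : G.Subgraph, IsBlock G B → IsSRDColoring B.coe (c ∘ Sym2.map Subtype.val)) :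
    IsSRDColoring G c := by
  intro u v huv
  obtain ⟨F, hF⟩ := exists_cutsBetween_of_forall_isBlock hc huv
  obtain ⟨M, hM, hMcard⟩ := hF.exists_card_eq_lam
  by_cases h : G.Reachable u v
  · obtain ⟨p⟩ := h
    obtain ⟨B, hB, a, b, ha, hb, hab⟩ := exists_isBlock_isGate_not_reachable _ p hM.2
    obtain ⟨N, hN, hNcard, hinj⟩ := hc B hB a b fun hab' => hab (hab' ▸ .refl _)
    refine ⟨_, hN.liftEdges hB ha hb, ?_, injOn_liftEdges hinj⟩
    rw [card_liftEdges, hNcard, lam_coe_eq_of_isGate hB ha hb hMcard hab]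
  · exact ⟨∅, cutsBetween_empty h, (lam_le_card (cutsBetween_empty h)).antisymm' (Nat.zero_le _),
      by simp⟩

lemma exists_glued_coloring {α : Type*} [Nonempty α] (d : ∀ B : G.Subgraph, Sym2 B.verts → α) :
    ∃ c : Sym2 V → α, ∀ B : G.Subgraph, IsBlock G B →
      Set.EqOn (d B) (c ∘ Sym2.map Subtype.val) B.coe.edgeSet := by
  have hcolor (e : Sym2 V) : ∃ x : α, ∀ B : G.Subgraph, IsBlock G B →
      ∀ f ∈ B.coe.edgeSet, f.map Subtype.val = e → d B f = x := by
    by_cases he : ∃ B : G.Subgraph, IsBlock G B ∧ ∃ f ∈ B.coe.edgeSet, f.map Subtype.val = e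
    · obtain ⟨B, hB, f, hf, rfl⟩ := he
      refine ⟨d B f, fun C hC g hg hgf => ?_⟩
      obtain rfl : C = B := hC.eq_of_mem_edgeSet hB (map_val_mem_edgeSet_iff.2 hg)
        (hgf ▸ map_val_mem_edgeSet_iff.2 hf)
      rw [Sym2.map.injective Subtype.val_injective hgf]
    · exact ⟨Classical.arbitrary α, fun B hB f hf hfe => absurd ⟨B, hB, f, hf, hfe⟩ he⟩
  choose c hc using hcolor
  exact ⟨c, fun B hB f hf => hc _ B hB f hf rfl⟩

/-- `G` has a strong rainbow disconnection coloring with colors `0, …, k - 1`, so that `srd G` is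
the least such `k`, or the junk value `sInf ∅ = 0` if there is none. -/
def SRDColorable (G : SimpleGraph V) (k : ℕ) : Prop :=
  ∃ c : Sym2 V → ℕ, (∀ e ∈ G.edgeSet, c e < k) ∧ IsSRDColoring G c

lemma SRDColorable.mono {k l : ℕ} (hG : SRDColorable G k) (hkl : k ≤ l) : SRDColorable G l :=
  let ⟨c, hck, hc⟩ := hG
  ⟨c, fun e he => (hck e he).trans_le hkl, hc⟩

lemma SRDColorable.srd_le {k : ℕ} (hG : SRDColorable G k) : srd G ≤ k :=
  Nat.sInf_le hG

lemma SRDColorable.srdColorable_srd {k : ℕ} (hG : SRDColorable G k) : SRDColorable G (srd G) :=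
  Nat.sInf_mem (s := {k | SRDColorable G k}) ⟨k, hG⟩

lemma exists_srdColorable [Finite V] (G : SimpleGraph V) : ∃ k, SRDColorable G k := by
  obtain ⟨n, ⟨f⟩⟩ := Finite.exists_equiv_fin (Sym2 V)
  refine ⟨n, fun e => f e, fun e _ => (f e).2, fun u v huv => ?_⟩
  have hcut : CutsBetween G u v (Set.toFinite G.edgeSet).toFinset := by
    refine ⟨by simp, ?_⟩
    rw [Set.Finite.coe_toFinset, deleteEdges_eq_bot.2 subset_rfl]
    exact reachable_bot.not.2 huv
  obtain ⟨M, hM, hcard⟩ := hcut.exists_card_eq_lam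
  exact ⟨M, hM, hcard, (Fin.val_injective.comp f.injective).injOn⟩

lemma srdColorable_iff_forall_isBlock {k : ℕ} :
    SRDColorable G k ↔ ∀ B : G.Subgraph, IsBlock G B → SRDColorable B.coe k := by
  constructor
  · rintro ⟨c, hck, hc⟩ B hB
    exact ⟨c ∘ Sym2.map Subtype.val,
      fun f hf => hck _ (B.edgeSet_subset (map_val_mem_edgeSet_iff.2 hf)), hc.comp_map_val hB⟩
  · intro h
    have hd (B : G.Subgraph) : ∃ d : Sym2 B.verts → ℕ,
        IsBlock G B → (∀ f ∈ B.coe.edgeSet, d f < k) ∧ IsSRDColoring B.coe d := by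
      by_cases hB : IsBlock G B
      · exact (h B hB).imp fun d hd _ => hd
      · exact ⟨0, fun hB' => absurd hB' hB⟩
    choose d hd using hd
    obtain ⟨c, hcd⟩ := exists_glued_coloring d
    refine ⟨c, fun e he => ?_,
      isSRDColoring_of_forall_isBlock fun B hB => (hd B hB).2.congr (hcd B hB)⟩
    induction e with | _ x y
    obtain ⟨B, hB, hadj⟩ := exists_isBlock_adj (G := G) he
    have hf : s(⟨x, hadj.fst_mem⟩, ⟨y, hadj.snd_mem⟩) ∈ B.coe.edgeSet := hadj
    calc c s(x, y) = d B s(⟨x, hadj.fst_mem⟩, ⟨y, hadj.snd_mem⟩) := (hcd B hB hf).symm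
      _ < k := (hd B hB).1 _ hf

theorem stmt6_general (hG : ∃ k, SRDColorable G k) (hB : IsBlock G B)
    (hmax : ∀ B' : G.Subgraph, IsBlock G B' → srd B'.coe ≤ srd B.coe) : srd G = srd B.coe := by
  obtain ⟨k, hk⟩ := hG
  have hblock := srdColorable_iff_forall_isBlock.1 hk
  apply le_antisymm
  · exact (srdColorable_iff_forall_isBlock.2 fun B' hB' =>
      (hblock B' hB').srdColorable_srd.mono (hmax B' hB')).srd_le
  · exact (srdColorable_iff_forall_isBlock.1 hk.srdColorable_srd B hB).srd_le

end

theorem stmt6 {V : Type*} [Fintype V] (G : SimpleGraph V)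
    (hG : G.Connected) (hGe : G.edgeSet.Nonempty)
    (B : G.Subgraph) (hB : IsBlock G B)
    (hmax : ∀ B' : G.Subgraph, IsBlock G B' → srd B'.coe ≤ srd B.coe) :
    srd G = srd B.coe :=
  stmt6_general (exists_srdColorable G) hB hmax
end

section
/- Let G = K_{n_1,...,n_k} be a complete k-partite graph of order n with k ≥ 2 and n_1 ≤ n_2 ≤ ... ≤ n_k. Then srd(G) = n − n_2 if n_1 = 1, and srd(G) = n − n_1 if n_1 ≥ 2. -/
open SimpleGraph

/-
In a complete multipartite graph `λ(u, v)` is the smaller of the two degrees. If `deg u ≤ deg v`,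
then `v` has at most as many nonneighbors as `u`, so there is an injection `f` from the former to
the latter. The walks `u w v`, for `w` a common neighbor, and `u w (f w) v`, for `w` a neighbor of
`u` but not of `v`, together with the edge `uv` if present, are `deg u` pairwise edge-disjoint
walks. Hence `srd G` is at least the second largest degree `D`.

Conversely, let `x` have maximum degree. The edges at the endpoint of smaller degree form a minimum
cut, so it suffices to color with `D` colors so that the edges at each vertex other than `x` get
distinct colors. Neighbors of `x` have degree less than `D` in `G - x`, and the other vertices are
pairwise nonadjacent, so `G - x` has a proper edge-coloring with `D` colors by Fournier's theorem.
Each neighbor `w` of `x` misses a color, which is given to the edge `wx`; the edges at `x` need not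
be compared with each other.
-/

open scoped Finset

section MaximumDegreeTwo

variable {V : Type*} [Fintype V] {G : SimpleGraph V} [DecidableRel G.Adj]

theorem two_mul_card_le_sum_degree_add_two (hG : G.Connected) :
    2 * Fintype.card V ≤ ∑ x, G.degree x + 2 := by
  have hcard := hG.card_vert_le_card_edgeSet_add_one
  rw [Nat.card_eq_fintype_card, Nat.card_eq_fintype_card, ← edgeFinset_card] at hcard
  have hsum := G.sum_degrees_eq_twice_card_edges
  omega

theorem card_degree_le_one_le_two (hG : G.Connected) (hdeg : ∀ x, G.degree x ≤ 2) :
    #{x | G.degree x ≤ 1} ≤ 2 := by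
  have hsum : ∑ x, G.degree x + #{x | G.degree x ≤ 1} ≤ 2 * Fintype.card V := by
    rw [Finset.card_filter, ← Finset.sum_add_distrib, mul_comm, ← smul_eq_mul,
      ← Finset.card_univ]
    refine Finset.sum_le_card_nsmul _ _ _ fun x _ => ?_
    have := hdeg x
    split_ifs <;> omega
  have := two_mul_card_le_sum_degree_add_two hG
  omega

theorem not_reachable_of_degree_le_one (hdeg : ∀ x, G.degree x ≤ 2) {u v w : V}
    (huv : u ≠ v) (huw : u ≠ w) (hvw : v ≠ w) (hu : G.degree u ≤ 1) (hv : G.degree v ≤ 1)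
    (hw : G.degree w ≤ 1) (hruv : G.Reachable u v) : ¬ G.Reachable u w := by
  classical
  intro hruw
  obtain ⟨C, hC⟩ : ∃ C, G.connectedComponentMk u = C := ⟨_, rfl⟩
  have hdegC (x : V) (hx : x ∈ C) : C.toSimpleGraph.degree ⟨x, hx⟩ ≤ G.degree x :=
    Finset.card_le_card_of_injOn Subtype.val
      (fun y hy => (mem_neighborFinset _ _ _).2
        (C.toSimpleGraph_hom.map_adj ((mem_neighborFinset _ _ _).1 hy)))
      Subtype.val_injective.injOn
  have hvC : v ∈ C := (ConnectedComponent.sound hruv.symm).trans hC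
  have hwC : w ∈ C := (ConnectedComponent.sound hruw.symm).trans hC
  have hsub : ({⟨u, hC⟩, ⟨v, hvC⟩, ⟨w, hwC⟩} : Finset C) ⊆
      ({x | C.toSimpleGraph.degree x ≤ 1} : Finset C) := by
    simp only [Finset.insert_subset_iff, Finset.singleton_subset_iff, Finset.mem_filter_univ]
    exact ⟨(hdegC u hC).trans hu, (hdegC v hvC).trans hv, (hdegC w hwC).trans hw⟩
  have hthree : #({⟨u, hC⟩, ⟨v, hvC⟩, ⟨w, hwC⟩} : Finset C) = 3 :=
    Finset.card_eq_three.2 ⟨_, _, _, Subtype.coe_ne_coe.1 huv, Subtype.coe_ne_coe.1 huw,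
      Subtype.coe_ne_coe.1 hvw, rfl⟩
  have htwo := card_degree_le_one_le_two C.connected_toSimpleGraph fun x =>
    (hdegC x x.2).trans (hdeg x)
  have := Finset.card_le_card hsub
  omega

end MaximumDegreeTwo

section EdgeColoring

variable {V κ : Type*} {G : SimpleGraph V} {c : Sym2 V → κ} {v w x y z : V} {a b d : κ}

theorem injOn_incidenceSet_iff :
    Set.InjOn c (G.incidenceSet x) ↔
      ∀ ⦃y z⦄, G.Adj x y → G.Adj x z → c s(x, y) = c s(x, z) → y = z := by
  constructor
  · intro h y z hy hz hyz
    exact Sym2.congr_right.1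
      (h ((mem_incidenceSet G x y).2 hy) ((mem_incidenceSet G x z).2 hz) hyz)
  · rintro h _ ⟨he, hxe⟩ _ ⟨hf, hxf⟩ hef
    obtain ⟨y, rfl⟩ := Sym2.mem_iff_exists.1 hxe
    obtain ⟨z, rfl⟩ := Sym2.mem_iff_exists.1 hxf
    exact congrArg (s(x, ·)) (h he hf hef)

/-- `c` is a proper edge-coloring of `G`: distinct edges of `G` at a common vertex get distinct
colors. The values of `c` outside `G.edgeSet` are irrelevant. -/
def IsProperEdgeColoring (G : SimpleGraph V) (c : Sym2 V → κ) : Prop :=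
  ∀ x, Set.InjOn c (G.incidenceSet x)

/-- The color `a` is missing at the vertex `x`: no edge of `G` at `x` has color `a`. -/
def MissesColor (G : SimpleGraph V) (c : Sym2 V → κ) (x : V) (a : κ) : Prop :=
  ∀ ⦃y⦄, G.Adj x y → c s(x, y) ≠ a

theorem IsProperEdgeColoring.eq_of_adj (hc : IsProperEdgeColoring G c) (hy : G.Adj x y)
    (hz : G.Adj x z) (h : c s(x, y) = c s(x, z)) : y = z :=
  injOn_incidenceSet_iff.1 (hc x) hy hz h

theorem exists_missesColor [Fintype κ] [Fintype (G.neighborSet x)]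
    (hx : G.degree x < Fintype.card κ) (c : Sym2 V → κ) : ∃ a, MissesColor G c x a := by
  by_contra! h
  simp only [MissesColor, not_forall, not_not] at h
  choose f hadj hf using h
  have hinj : Function.Injective f := fun a b hab => by rw [← hf a, ← hf b, hab]
  refine hx.not_ge (Finset.card_le_card_of_injOn f (fun a _ => ?_) hinj.injOn)
  simpa using hadj a

section Update

variable [DecidableEq V]

theorem MissesColor.update (h : MissesColor G c x d) (hv : x ≠ v) (hz : x ≠ z) :
    MissesColor G (Function.update c s(v, z) a) x d := by
  intro y hy
  rw [Function.update_of_ne (by grind)]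
  exact h hy

theorem IsProperEdgeColoring.update (hc : IsProperEdgeColoring G c) (hv : MissesColor G c v a)
    (hz : MissesColor G c z a) :
    IsProperEdgeColoring (G ⊔ edge v z) (Function.update c s(v, z) a) := by
  refine fun x => injOn_incidenceSet_iff.2 fun y y' hy hy' h => ?_
  have hxy := @IsProperEdgeColoring.eq_of_adj _ _ _ _ x y y' hc
  simp only [sup_adj, edge_adj] at hy hy'
  unfold MissesColor at hv hz
  grind [Function.update_apply]

end Update

/-- `kempeGraph G c a b` is the subgraph of the edges of `G` with color `a` or `b`. -/
def kempeGraph (G : SimpleGraph V) (c : Sym2 V → κ) (a b : κ) : SimpleGraph V where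
  Adj x y := G.Adj x y ∧ (c s(x, y) = a ∨ c s(x, y) = b)
  symm := ⟨fun x y h => by rw [Sym2.eq_swap]; exact ⟨h.1.symm, h.2⟩⟩

theorem IsProperEdgeColoring.degree_kempeGraph_le (hc : IsProperEdgeColoring G c)
    [Fintype ((kempeGraph G c a b).neighborSet x)] {s : Finset κ}
    (hs : ∀ y, (kempeGraph G c a b).Adj x y → c s(x, y) ∈ s) :
    (kempeGraph G c a b).degree x ≤ #s := by
  refine Finset.card_le_card_of_injOn (fun y => c s(x, y)) (fun y hy => hs y (by simpa using hy))
    fun y hy z hz h => ?_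
  rw [Finset.mem_coe, mem_neighborFinset] at hy hz
  exact hc.eq_of_adj hy.1 hz.1 h

theorem IsProperEdgeColoring.degree_kempeGraph_le_one (hc : IsProperEdgeColoring G c)
    [Fintype ((kempeGraph G c a b).neighborSet x)]
    (h : MissesColor G c x a ∨ MissesColor G c x b) : (kempeGraph G c a b).degree x ≤ 1 := by
  rcases h with h | h
  · exact hc.degree_kempeGraph_le (s := {b}) fun y hy => by simpa [h hy.1] using hy.2
  · exact hc.degree_kempeGraph_le (s := {a}) fun y hy => by simpa [h hy.1] using hy.2

theorem IsProperEdgeColoring.eq_of_missesColor_of_reachable [Finite V]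
    (hc : IsProperEdgeColoring G c) (hv : MissesColor G c v a) (hy : MissesColor G c y b)
    (hz : MissesColor G c z b) (hvy : v ≠ y) (hvz : v ≠ z)
    (hry : (kempeGraph G c a b).Reachable y v) (hrz : (kempeGraph G c a b).Reachable z v) :
    y = z := by
  classical
  have := Fintype.ofFinite V
  by_contra hyz
  have hdeg : ∀ x, (kempeGraph G c a b).degree x ≤ 2 := fun x =>
    (hc.degree_kempeGraph_le (s := {a, b}) fun y hy => by simpa using hy.2).trans
      Finset.card_le_two
  exact not_reachable_of_degree_le_one hdeg hvy hvz hyz (hc.degree_kempeGraph_le_one (.inl hv))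
    (hc.degree_kempeGraph_le_one (.inr hy)) (hc.degree_kempeGraph_le_one (.inr hz)) hry.symm
    hrz.symm

open Classical in
/-- The Kempe exchange: `a` and `b` are swapped on the component of `r` in `kempeGraph G c a b`.
All edges meeting this component may be treated alike since swapping fixes the other colors. -/
noncomputable def kempeSwap (G : SimpleGraph V) (c : Sym2 V → κ) (a b : κ) (r : V)
    (e : Sym2 V) : κ :=
  if ∃ x ∈ e, (kempeGraph G c a b).Reachable r x then Equiv.swap a b (c e) else c e

variable {r : V}

open Classical in
theorem kempeSwap_of_reachable (hx : (kempeGraph G c a b).Reachable r x) (y : V) :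
    kempeSwap G c a b r s(x, y) = Equiv.swap a b (c s(x, y)) :=
  if_pos ⟨x, Sym2.mem_mk_left x y, hx⟩

theorem kempeSwap_of_not_reachable (hx : ¬ (kempeGraph G c a b).Reachable r x)
    (hxy : G.Adj x y) : kempeSwap G c a b r s(x, y) = c s(x, y) := by
  classical
  by_cases hy : (kempeGraph G c a b).Reachable r y
  · have hcol : ¬ (c s(x, y) = a ∨ c s(x, y) = b) := fun h =>
      hx (hy.trans (Adj.reachable (G := kempeGraph G c a b) ⟨hxy, h⟩).symm)
    rw [not_or] at hcol
    rw [Sym2.eq_swap, kempeSwap_of_reachable hy, Sym2.eq_swap,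
      Equiv.swap_apply_of_ne_of_ne hcol.1 hcol.2]
  · exact if_neg (by simp [hx, hy])

theorem IsProperEdgeColoring.kempeSwap (hc : IsProperEdgeColoring G c) :
    IsProperEdgeColoring G (kempeSwap G c a b r) := by
  classical
  refine fun x => injOn_incidenceSet_iff.2 fun y z hy hz h => hc.eq_of_adj hy hz ?_
  by_cases hx : (kempeGraph G c a b).Reachable r x
  · rwa [kempeSwap_of_reachable hx, kempeSwap_of_reachable hx, Equiv.apply_eq_iff_eq] at h
  · rwa [kempeSwap_of_not_reachable hx hy, kempeSwap_of_not_reachable hx hz] at h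

open Classical in
theorem MissesColor.kempeSwap_of_reachable (h : MissesColor G c x d)
    (hx : (kempeGraph G c a b).Reachable r x) :
    MissesColor G (kempeSwap G c a b r) x (Equiv.swap a b d) := by
  intro y hy
  rw [_root_.kempeSwap_of_reachable hx, Ne, Equiv.apply_eq_iff_eq]
  exact h hy

theorem MissesColor.kempeSwap_of_not_reachable (h : MissesColor G c x d)
    (hx : ¬ (kempeGraph G c a b).Reachable r x) : MissesColor G (kempeSwap G c a b r) x d := by
  intro y hy
  rw [_root_.kempeSwap_of_not_reachable hx hy]
  exact h hy

theorem MissesColor.kempeSwap_of_ne (h : MissesColor G c x d) (ha : d ≠ a)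
    (hb : d = b → ¬ (kempeGraph G c a b).Reachable r x) :
    MissesColor G (kempeSwap G c a b r) x d := by
  classical
  by_cases hx : (kempeGraph G c a b).Reachable r x
  · simpa only [Equiv.swap_apply_of_ne_of_ne ha fun h => hb h hx] using h.kempeSwap_of_reachable hx
  · exact h.kempeSwap_of_not_reachable hx

/-- `F` is a (multi-)fan at `v` with initial vertex `w`, where `vw` is the edge to be colored: the
vertices of `F` can be listed, starting with `w`, so that the color of each later spoke `vz` is
missing at some vertex before `z`. -/
inductive IsFan (G : SimpleGraph V) (c : Sym2 V → κ) (v w : V) : Finset V → Prop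
  | singleton : IsFan G c v w {w}
  | cons {F : Finset V} {y z : V} (hF : IsFan G c v w F) (hz : z ∉ F) (hvz : G.Adj v z)
      (hy : y ∈ F) (hyz : MissesColor G c y (c s(v, z))) : IsFan G c v w (F.cons z hz)

namespace IsFan

variable {F : Finset V}

theorem initial_mem (hF : IsFan G c v w F) : w ∈ F := by
  induction hF with
  | singleton => exact Finset.mem_singleton_self w
  | cons _ _ _ _ _ ih => exact Finset.mem_cons_of_mem ih

theorem eq_or_adj (hF : IsFan G c v w F) (hx : x ∈ F) : x = w ∨ G.Adj v x := by
  induction hF with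
  | singleton => exact .inl (by simpa using hx)
  | cons _ _ hvz _ _ ih =>
    rcases Finset.mem_cons.1 hx with rfl | hx
    · exact .inr hvz
    · exact ih hx

theorem ne_center (hF : IsFan G c v w F) (hvw : v ≠ w) (hx : x ∈ F) : v ≠ x :=
  (hF.eq_or_adj hx).elim (fun h => h ▸ hvw) Adj.ne

theorem congr {c' : Sym2 V → κ} (hF : IsFan G c v w F)
    (hcol : ∀ z ∈ F, G.Adj v z → c' s(v, z) = c s(v, z))
    (hmiss : ∀ y ∈ F, ∀ z ∈ F, G.Adj v z → MissesColor G c y (c s(v, z)) →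
      MissesColor G c' y (c s(v, z))) : IsFan G c' v w F := by
  induction hF with
  | singleton => exact .singleton
  | @cons F y z _ hz hvz hy hyz ih =>
    have hsub : F ⊆ F.cons z hz := Finset.subset_cons hz
    have hzmem : z ∈ F.cons z hz := Finset.mem_cons_self z F
    refine .cons (ih (fun z hz => hcol z (hsub hz))
      fun y hy z hz => hmiss y (hsub hy) z (hsub hz)) hz hvz hy ?_
    rw [hcol z hzmem hvz]
    exact hmiss y (hsub hy) z hzmem hvz hyz

theorem update [DecidableEq V] (hF : IsFan G c v w F) (hvw : v ≠ w) (hz : z ∉ F) :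
    IsFan G (Function.update c s(v, z) a) v w F :=
  hF.congr
    (fun _ hy _ => Function.update_of_ne (mt Sym2.congr_right.1 (ne_of_mem_of_not_mem hy hz)) _ _)
    fun _ hy _ _ _ h => h.update (hF.ne_center hvw hy).symm (ne_of_mem_of_not_mem hy hz)

theorem kempeSwap (hF : IsFan G c v w F) (hv : MissesColor G c v a)
    (hrv : ¬ (kempeGraph G c a b).Reachable r v)
    (hr : ∀ y ∈ F, MissesColor G c y b → ¬ (kempeGraph G c a b).Reachable r y) :
    IsFan G (kempeSwap G c a b r) v w F :=
  hF.congr (fun _ _ hvz => kempeSwap_of_not_reachable hrv hvz) fun y hy _ _ hvz hyz =>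
    hyz.kempeSwap_of_ne (hv hvz) fun h => hr y hy (h ▸ hyz)

-- Recoloring `vz` with `a` frees its color at `v`, and that color is missing earlier in the fan.
theorem exists_isProperEdgeColoring_sup_edge_of_missesColor (hF : IsFan G c v w F)
    (hc : IsProperEdgeColoring G c) (hvw : v ≠ w) (hx : x ∈ F) (hva : MissesColor G c v a)
    (hxa : MissesColor G c x a) : ∃ c' : Sym2 V → κ, IsProperEdgeColoring (G ⊔ edge v w) c' := by
  classical
  induction F using Finset.strongInduction generalizing c x a with
  | H F ih =>
  cases hF with
  | singleton =>
    obtain rfl := Finset.mem_singleton.1 hx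
    exact ⟨_, hc.update hva hxa⟩
  | @cons F y z hF hz hvz hy hyz =>
    by_cases hxF : x ∈ F
    · exact ih F (Finset.ssubset_cons hz) hF hc hxF hva hxa
    obtain rfl : x = z := (Finset.mem_cons.1 hx).resolve_right hxF
    have hc' : IsProperEdgeColoring G (Function.update c s(v, x) a) := by
      simpa only [sup_edge_of_adj G hvz] using hc.update hva hxa
    have hv : MissesColor G (Function.update c s(v, x) a) v (c s(v, x)) := by
      intro t ht
      rcases eq_or_ne t x with rfl | htx
      · simpa using (hva ht).symm
      · rw [Function.update_of_ne (mt Sym2.congr_right.1 htx)]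
        exact mt (hc.eq_of_adj ht hvz) htx
    exact ih F (Finset.ssubset_cons hz) (hF.update hvw hz) hc' hy hv
      (hyz.update (hF.ne_center hvw hy).symm (ne_of_mem_of_not_mem hy hz))

theorem exists_isProperEdgeColoring_sup_edge_of_not_reachable (hF : IsFan G c v w F)
    (hc : IsProperEdgeColoring G c) (hvw : v ≠ w) (hx : x ∈ F) (hva : MissesColor G c v a)
    (hxb : MissesColor G c x b) (hxv : ¬ (kempeGraph G c a b).Reachable x v) :
    ∃ c' : Sym2 V → κ, IsProperEdgeColoring (G ⊔ edge v w) c' := by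
  classical
  induction hF generalizing x with
  | singleton =>
    refine singleton.exists_isProperEdgeColoring_sup_edge_of_missesColor hc.kempeSwap hvw hx
      (hva.kempeSwap_of_not_reachable hxv) ?_
    simpa only [Equiv.swap_apply_right] using hxb.kempeSwap_of_reachable (a := a) (b := b) (.refl x)
  | @cons F y z hF hz hvz hy hyz ih =>
    by_cases hbad : ∃ t ∈ F, MissesColor G c t b ∧ ¬ (kempeGraph G c a b).Reachable t v
    · obtain ⟨t, ht, htb, htv⟩ := hbad
      exact ih ht htb htv
    push Not at hbad
    have hgood : ∀ t ∈ F, MissesColor G c t b → ¬ (kempeGraph G c a b).Reachable x t :=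
      fun t ht htb hxt => hxv (hxt.trans (hbad t ht htb))
    have hF' : IsFan G (_root_.kempeSwap G c a b x) v w (F.cons z hz) := by
      refine .cons (hF.kempeSwap hva hxv hgood) hz hvz hy ?_
      rw [kempeSwap_of_not_reachable hxv hvz]
      exact hyz.kempeSwap_of_ne (hva hvz) fun h => hgood y hy (h ▸ hyz)
    refine hF'.exists_isProperEdgeColoring_sup_edge_of_missesColor hc.kempeSwap hvw hx
      (hva.kempeSwap_of_not_reachable hxv) ?_
    simpa only [Equiv.swap_apply_right] using hxb.kempeSwap_of_reachable (a := a) (b := b) (.refl x)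

end IsFan

-- In a maximal fan, sending each vertex `y` to the `z` such that `vz` has a color missing at `y`
-- would be an injection of the fan into the fan without `w`.
theorem IsProperEdgeColoring.exists_isProperEdgeColoring_sup_edge [Finite V]
    (hc : IsProperEdgeColoring G c) (hvw : v ≠ w) (hadj : ¬ G.Adj v w) (hva : MissesColor G c v a)
    (hmiss : ∀ y, (G ⊔ edge v w).Adj v y → ∃ b, MissesColor G c y b) :
    ∃ c' : Sym2 V → κ, IsProperEdgeColoring (G ⊔ edge v w) c' := by
  classical
  by_contra hext
  obtain ⟨F, hF, hmax⟩ :=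
    (Set.toFinite {F | IsFan G c v w F}).exists_maximal ⟨{w}, IsFan.singleton⟩
  have hnext : ∀ y : F, ∃ z, G.Adj v z ∧ MissesColor G c y (c s(v, z)) := by
    rintro ⟨y, hy⟩
    obtain ⟨b, hyb⟩ := hmiss y (by grind [hF.eq_or_adj hy])
    by_contra! h
    exact hext (hF.exists_isProperEdgeColoring_sup_edge_of_missesColor hc hvw hy
      (fun z hz hzb => h z hz (hzb ▸ hyb)) hyb)
  choose f hvf hf using hnext
  have hmem (y : F) : f y ∈ F.erase w := by
    refine Finset.mem_erase.2 ⟨fun h => hadj (h ▸ hvf y), ?_⟩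
    by_contra hz
    exact hz (hmax (hF.cons hz (hvf y) y.2 (hf y)) (Finset.subset_cons hz)
      (Finset.mem_cons_self _ _))
  have hlink (y : F) {b : κ} (hyb : MissesColor G c y b) :
      (kempeGraph G c a b).Reachable y v := by
    by_contra h
    exact hext (hF.exists_isProperEdgeColoring_sup_edge_of_not_reachable hc hvw y.2 hva hyb h)
  have hinj : Function.Injective f := by
    intro y z hyz
    have hfz : MissesColor G c z (c s(v, f y)) := hyz ▸ hf z
    exact Subtype.ext (hc.eq_of_missesColor_of_reachable hva (hf y) hfz (hF.ne_center hvw y.2)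
      (hF.ne_center hvw z.2) (hlink y (hf y)) (hlink z hfz))
  refine (Finset.card_erase_lt_of_mem hF.initial_mem).not_ge ?_
  rw [← Fintype.card_coe F, ← Finset.card_univ]
  exact Finset.card_le_card_of_injOn f (fun y _ => hmem y) hinj.injOn

theorem degree_lt_degree_of_le {H : SimpleGraph V} [Fintype (G.neighborSet v)]
    [Fintype (H.neighborSet v)] (hle : H ≤ G) (hG : G.Adj v w) (hH : ¬ H.Adj v w) :
    H.degree v < G.degree v :=
  Finset.card_lt_card (Set.toFinset_ssubset_toFinset.2 ⟨fun _ h => hle h, fun h => hH (h hG)⟩)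

theorem exists_adj_forall_adj_degree_lt [Fintype V] [DecidableRel G.Adj] {D : ℕ} (hG : G ≠ ⊥)
    (hcore : ∀ x y, G.Adj x y → G.degree x < D ∨ G.degree y < D) :
    ∃ v w, G.Adj v w ∧ ∀ y, G.Adj v y → G.degree y < D := by
  by_cases hmax : ∃ v w, G.Adj v w ∧ ¬ G.degree v < D
  · obtain ⟨v, w, hvw, hv⟩ := hmax
    exact ⟨v, w, hvw, fun y hy => (hcore v y hy).resolve_left hv⟩
  · push Not at hmax
    obtain ⟨v, w, hvw⟩ := ne_bot_iff_exists_adj.1 hG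
    exact ⟨v, w, hvw, fun y hy => hmax y v hy.symm⟩

-- Fournier's strengthening of Vizing's theorem.
theorem exists_isProperEdgeColoring_of_degree_le [Fintype V] [Fintype κ] [Nonempty κ]
    (G : SimpleGraph V) [hdec : DecidableRel G.Adj] (hdeg : ∀ x, G.degree x ≤ Fintype.card κ)
    (hcore : ∀ x y, G.Adj x y → G.degree x < Fintype.card κ ∨ G.degree y < Fintype.card κ) :
    ∃ c : Sym2 V → κ, IsProperEdgeColoring G c := by
  induction G using WellFoundedLT.induction generalizing hdec with
  | ind G ih =>
  classical
  rcases eq_or_ne G ⊥ with rfl | hG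
  · exact ⟨fun _ => Classical.arbitrary κ, fun x => by simp [incidenceSet]⟩
  obtain ⟨v, w, hvw, hnbr⟩ := exists_adj_forall_adj_degree_lt hG hcore
  have hle : G.deleteEdges {s(v, w)} ≤ G := G.deleteEdges_le _
  have hadj : ¬ (G.deleteEdges {s(v, w)}).Adj v w := by simp
  have hsup : G.deleteEdges {s(v, w)} ⊔ edge v w = G :=
    sdiff_sup_cancel ((edge_le_iff G).2 (.inr hvw))
  have hmono (x : V) : (G.deleteEdges {s(v, w)}).degree x ≤ G.degree x := degree_le_of_le hle
  have hlt : (G.deleteEdges {s(v, w)}).degree v < G.degree v :=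
    degree_lt_degree_of_le hle hvw hadj
  obtain ⟨c, hc⟩ := ih _ (hle.lt_of_not_ge fun h => hadj (h hvw))
    (fun x => (hmono x).trans (hdeg x))
    fun x y hxy => (hcore x y (hle hxy)).imp (hmono x).trans_lt (hmono y).trans_lt
  obtain ⟨a, ha⟩ := exists_missesColor (hlt.trans_le (hdeg v)) c
  rw [← hsup]
  exact hc.exists_isProperEdgeColoring_sup_edge hvw.ne hadj ha fun y hy =>
    exists_missesColor ((hmono y).trans_lt (hnbr y (hsup ▸ hy))) c

theorem IsProperEdgeColoring.exists_forall_ne_injOn_incidenceSet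
    (hc : IsProperEdgeColoring (G.deleteIncidenceSet x) c)
    (hmiss : ∀ w, G.Adj x w → ∃ a, MissesColor (G.deleteIncidenceSet x) c w a) :
    ∃ c' : Sym2 V → κ, ∀ w ≠ x, Set.InjOn c' (G.incidenceSet w) := by
  classical
  have : Nonempty κ := ⟨c s(x, x)⟩
  choose! m hm using hmiss
  let c' (e : Sym2 V) : κ := if h : x ∈ e then m (Sym2.Mem.other h) else c e
  have hcx (w : V) : c' s(w, x) = m w := by
    have h : x ∈ s(w, x) := Sym2.mem_mk_right w x
    have hother := Sym2.other_spec h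
    rw [Sym2.eq_swap, Sym2.congr_left] at hother
    simp only [c', dif_pos h, hother]
  have hc' {w y : V} (hw : w ≠ x) (hy : y ≠ x) : c' s(w, y) = c s(w, y) :=
    dif_neg (by simp [hw.symm, hy.symm])
  refine ⟨c', fun w hw => injOn_incidenceSet_iff.2 fun y z hy hz h => ?_⟩
  have hadj {y : V} (hy : G.Adj w y) (hyx : y ≠ x) : (G.deleteIncidenceSet x).Adj w y :=
    deleteIncidenceSet_adj.2 ⟨hy, hw, hyx⟩
  have hne {y z : V} (hy : G.Adj w y) (hz : G.Adj w z) (hyx : y ≠ x) (hzx : z = x) :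
      c' s(w, y) ≠ c' s(w, z) := by
    rw [hc' hw hyx, hzx, hcx]
    exact hm w (hzx ▸ hz.symm) (hadj hy hyx)
  by_cases hyx : y = x <;> by_cases hzx : z = x
  · exact hyx.trans hzx.symm
  · exact absurd h.symm (hne hz hy hzx hyx)
  · exact absurd h (hne hy hz hyx hzx)
  · rw [hc' hw hyx, hc' hw hzx] at h
    exact hc.eq_of_adj (hadj hy hyx) (hadj hz hzx) h

theorem exists_forall_ne_injOn_incidenceSet [Fintype V] [Fintype κ] [Nonempty κ]
    [DecidableRel G.Adj] (hdeg : ∀ w ≠ x, G.degree w ≤ Fintype.card κ)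
    (hcore : ∀ u w, G.Adj u w → G.Adj x u ∨ G.Adj x w) :
    ∃ c : Sym2 V → κ, ∀ w ≠ x, Set.InjOn c (G.incidenceSet w) := by
  classical
  have hx (w : V) : ¬ (G.deleteIncidenceSet x).Adj w x := fun h =>
    (deleteIncidenceSet_adj.1 h).2.2 rfl
  have hlt (w : V) (hw : G.Adj x w) : (G.deleteIncidenceSet x).degree w < Fintype.card κ :=
    (degree_lt_degree_of_le (G.deleteIncidenceSet_le x) hw.symm (hx w)).trans_le (hdeg w hw.ne')
  have hle (w : V) : (G.deleteIncidenceSet x).degree w ≤ Fintype.card κ := by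
    rcases eq_or_ne w x with rfl | hw
    · exact ((degree_eq_zero _ w).2 fun y h => hx y h.symm).trans_le zero_le
    · exact (degree_le_of_le (G.deleteIncidenceSet_le x)).trans (hdeg w hw)
  obtain ⟨c, hc⟩ := exists_isProperEdgeColoring_of_degree_le (G.deleteIncidenceSet x) hle
    fun u w h => (hcore u w (G.deleteIncidenceSet_le x h)).imp (hlt u) (hlt w)
  exact hc.exists_forall_ne_injOn_incidenceSet fun w hw => exists_missesColor (hlt w hw) c

end EdgeColoring

section EdgeCuts

variable {V : Type*} {G : SimpleGraph V} {u v : V} {F : Finset (Sym2 V)}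

theorem CutsBetween.symm (hF : CutsBetween G u v F) : CutsBetween G v u F :=
  ⟨hF.1, fun h => hF.2 h.symm⟩

theorem lam_comm : lam G u v = lam G v u :=
  congrArg sInf (Set.ext fun _ =>
    exists_congr fun _ => and_congr_left fun _ => ⟨CutsBetween.symm, CutsBetween.symm⟩)

theorem CutsBetween.card_le_of_pairwise_disjoint_edges {ι : Type*} [Fintype ι]
    (hF : CutsBetween G u v F) (p : ι → G.Walk u v)
    (hp : Pairwise fun i j => (p i).edges.Disjoint (p j).edges) : Fintype.card ι ≤ #F := by
  have hmeet (i : ι) : ∃ e ∈ F, e ∈ (p i).edges := by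
    by_contra! h
    exact hF.2 ⟨(p i).toDeleteEdges F fun e he heF => h e heF he⟩
  choose e heF hep using hmeet
  have hinj : Function.Injective e := by
    intro i j hij
    by_contra hne
    exact hp hne (hep i) (hij ▸ hep j)
  exact Finset.card_le_card_of_injOn e (fun i _ => heF i) hinj.injOn

theorem IsSRDColoring.lam_le {c : Sym2 V → ℕ} {k : ℕ} (hc : IsSRDColoring G c)
    (hck : ∀ e ∈ G.edgeSet, c e < k) (huv : u ≠ v) : lam G u v ≤ k := by
  obtain ⟨F, hF, hcard, hinj⟩ := hc u v huv
  rw [← hcard, ← Finset.card_range k]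
  exact Finset.card_le_card_of_injOn c (fun e he => Finset.mem_coe.2
    (Finset.mem_range.2 (hck e (hF.1 he)))) hinj

variable [Fintype (G.neighborSet u)]

theorem cutsBetween_incidenceFinset [DecidableEq V] (huv : u ≠ v) :
    CutsBetween G u v (G.incidenceFinset u) := by
  rw [CutsBetween, coe_incidenceFinset]
  refine ⟨G.incidenceSet_subset u, ?_⟩
  rintro ⟨_ | ⟨h, _⟩⟩
  · exact huv rfl
  · rw [deleteEdges_adj] at h
    exact h.2 ((mem_incidenceSet G u _).2 h.1)

theorem lam_eq_degree_of_pairwise_disjoint_edges (huv : u ≠ v) (p : G.neighborSet u → G.Walk u v)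
    (hp : Pairwise fun w w' => (p w).edges.Disjoint (p w').edges) : lam G u v = G.degree u := by
  classical
  have hmem : G.degree u ∈ {n | ∃ F : Finset (Sym2 V), CutsBetween G u v F ∧ #F = n} :=
    ⟨_, cutsBetween_incidenceFinset huv, card_incidenceFinset_eq_degree G u⟩
  refine le_antisymm (Nat.sInf_le hmem) (le_csInf ⟨_, hmem⟩ ?_)
  rintro _ ⟨F, hF, rfl⟩
  rw [← card_neighborSet_eq_degree]
  exact hF.card_le_of_pairwise_disjoint_edges p hp

end EdgeCuts

section CompleteMultipartite

variable {V : Type*} {G : SimpleGraph V} {u v w x y : V}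

theorem adj_or_adj_of_isCompleteMultipartite (hG : G.IsCompleteMultipartite) (h : G.Adj x y)
    (w : V) : G.Adj w x ∨ G.Adj w y := by
  by_contra! hw
  exact hG.trans x w y (fun hx => hw.1 hx.symm) hw.2 h

theorem exists_walk_of_isCompleteMultipartite (hG : G.IsCompleteMultipartite) {f : V → V}
    (hf : Set.MapsTo f (Gᶜ.neighborSet v) (Gᶜ.neighborSet u)) (hw : G.Adj u w) :
    ∃ p : G.Walk u v, ∀ e ∈ p.edges, e = s(u, w) ∨ G.Adj w v ∧ e = s(w, v) ∨
      G.Adj u v ∧ w ∈ Gᶜ.neighborSet v ∧ (e = s(w, f w) ∨ e = s(f w, v)) := by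
  obtain rfl | hwv := eq_or_ne w v
  · exact ⟨hw.toWalk, by simp⟩
  by_cases hadj : G.Adj w v
  · exact ⟨.cons hw hadj.toWalk, by simp [hadj]⟩
  have hwc : w ∈ Gᶜ.neighborSet v := (compl_adj ..).2 ⟨hwv.symm, fun h => hadj h.symm⟩
  have hfu : ¬ G.Adj (f w) u := fun h => ((compl_adj ..).1 (hf hwc)).2 h.symm
  have huv : G.Adj u v :=
    ((adj_or_adj_of_isCompleteMultipartite hG hw v).resolve_right fun h => hadj h.symm).symm
  have hfw : G.Adj (f w) w := (adj_or_adj_of_isCompleteMultipartite hG hw _).resolve_left hfu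
  have hfv : G.Adj (f w) v := (adj_or_adj_of_isCompleteMultipartite hG huv _).resolve_left hfu
  exact ⟨.cons hw (.cons hfw.symm hfv.toWalk), by simp [huv, hwc]⟩

section Finite

variable [Fintype V] [DecidableRel G.Adj]

theorem exists_mapsTo_injOn_neighborSet_compl (h : G.degree u ≤ G.degree v) :
    ∃ f : V → V, Set.MapsTo f (Gᶜ.neighborSet v) (Gᶜ.neighborSet u) ∧
      Set.InjOn f (Gᶜ.neighborSet v) := by
  classical
  have : Nonempty V := ⟨u⟩
  refine ((Gᶜ.neighborSet v).toFinite.exists_injOn_of_encard_le (t := Gᶜ.neighborSet u) ?_)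
  rw [Set.encard_eq_coe_toFinset_card, Set.encard_eq_coe_toFinset_card, Nat.cast_le]
  rw [Set.toFinset_card, Set.toFinset_card, card_neighborSet_eq_degree, card_neighborSet_eq_degree,
    degree_compl, degree_compl]
  exact Nat.sub_le_sub_left h _

theorem lam_eq_degree_of_isCompleteMultipartite (hG : G.IsCompleteMultipartite) (huv : u ≠ v)
    (h : G.degree u ≤ G.degree v) : lam G u v = G.degree u := by
  obtain ⟨f, hf, hinj⟩ := exists_mapsTo_injOn_neighborSet_compl h
  choose p hp using fun w : G.neighborSet u => exists_walk_of_isCompleteMultipartite hG hf w.2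
  refine lam_eq_degree_of_pairwise_disjoint_edges huv p ?_
  rintro ⟨w, hw⟩ ⟨w', hw'⟩ hne e he he'
  have hne : w ≠ w' := fun h => hne (Subtype.ext h)
  -- No `f y` is a neighbor of `u`, so the inner vertices of the two walks are distinct.
  have hnbr (y : V) (hy : y ∈ Gᶜ.neighborSet v) : y ≠ v ∧ f y ≠ u ∧ ¬ G.Adj u (f y) :=
    ⟨((compl_adj ..).1 hy).1.symm, ((compl_adj ..).1 (hf hy)).1.symm, ((compl_adj ..).1 (hf hy)).2⟩
  have hwu : w ≠ u := (G.ne_of_adj hw).symm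
  have hwu' : w' ≠ u := (G.ne_of_adj hw').symm
  rw [mem_neighborSet] at hw hw'
  have hpw' := hp _ e he'
  rcases hp _ e he with rfl | ⟨_, rfl⟩ | ⟨_, _, rfl | rfl⟩ <;>
    simp only [Sym2.eq_iff] at hpw' <;> grind [Set.InjOn]

theorem isSRDColoring_of_injOn_incidenceSet (hG : G.IsCompleteMultipartite) {c : Sym2 V → ℕ}
    (hx : ∀ w, G.degree w ≤ G.degree x) (hc : ∀ w ≠ x, Set.InjOn c (G.incidenceSet w)) :
    IsSRDColoring G c := by
  classical
  have hcut {u v : V} (huv : u ≠ v) (hux : u ≠ x) (h : G.degree u ≤ G.degree v) :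
      ∃ F, CutsBetween G u v F ∧ #F = lam G u v ∧ Set.InjOn c F := by
    refine ⟨G.incidenceFinset u, cutsBetween_incidenceFinset huv, ?_, ?_⟩
    · rw [card_incidenceFinset_eq_degree, lam_eq_degree_of_isCompleteMultipartite hG huv h]
    · rw [coe_incidenceFinset]
      exact hc u hux
  intro u v huv
  by_cases h : u ≠ x ∧ G.degree u ≤ G.degree v
  · exact hcut huv h.1 h.2
  · have hvu : v ≠ x ∧ G.degree v ≤ G.degree u := by grind
    obtain ⟨F, hF, hcard, hinj⟩ := hcut huv.symm hvu.1 hvu.2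
    exact ⟨F, hF.symm, hcard.trans lam_comm, hinj⟩

theorem exists_isSRDColoring_lt_degree (hG : G.IsCompleteMultipartite)
    (hx : ∀ w, G.degree w ≤ G.degree x) (hu : ∀ w ≠ x, G.degree w ≤ G.degree u) :
    ∃ c : Sym2 V → ℕ, (∀ e ∈ G.edgeSet, c e < G.degree u) ∧ IsSRDColoring G c := by
  obtain hzero | hpos := (G.degree u).eq_zero_or_pos
  · have hbot : G.edgeSet = ∅ := by
      refine edgeSet_eq_empty.2 (eq_bot_iff_forall_not_adj.2 fun w w' h => ?_)
      have hw (y z : V) (hyz : G.Adj y z) : y = x := by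
        by_contra hyx
        have := G.degree_pos_iff_exists_adj y |>.2 ⟨z, hyz⟩
        have := hu y hyx
        omega
      exact h.ne ((hw w w' h).trans (hw w' w h.symm).symm)
    refine ⟨0, by simp [hbot], isSRDColoring_of_injOn_incidenceSet hG hx fun w _ => ?_⟩
    simp [incidenceSet, hbot]
  · have : NeZero (G.degree u) := ⟨hpos.ne'⟩
    obtain ⟨c, hc⟩ := exists_forall_ne_injOn_incidenceSet (κ := Fin (G.degree u)) (x := x)
      (by simpa using hu) fun u w h => adj_or_adj_of_isCompleteMultipartite hG h x
    exact ⟨fun e => c e, fun e _ => (c e).2, isSRDColoring_of_injOn_incidenceSet hG hx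
      fun w hw => Fin.val_injective.comp_injOn (hc w hw)⟩

theorem srd_eq_degree (hG : G.IsCompleteMultipartite) (hux : u ≠ x)
    (hx : ∀ w, G.degree w ≤ G.degree x) (hu : ∀ w ≠ x, G.degree w ≤ G.degree u) :
    srd G = G.degree u := by
  have hmem := exists_isSRDColoring_lt_degree hG hx hu
  refine le_antisymm (Nat.sInf_le hmem) (le_csInf ⟨_, hmem⟩ ?_)
  rintro k ⟨c, hck, hc⟩
  rw [← lam_eq_degree_of_isCompleteMultipartite hG hux (hx u)]
  exact hc.lam_le hck hux

end Finite

section Parts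

variable {ι : Type*} [Fintype ι] {V : ι → Type*} [∀ i, Fintype (V i)]

theorem degree_completeMultipartiteGraph_add_card [DecidableRel (completeMultipartiteGraph V).Adj]
    (u : Σ i, V i) :
    (completeMultipartiteGraph V).degree u + Fintype.card (V u.1) = ∑ i, Fintype.card (V i) := by
  classical
  have hpart : Fintype.card (V u.1) = #{w : Σ i, V i | w.1 = u.1} := by
    rw [← Fintype.card_subtype]
    exact Fintype.card_congr (Equiv.sigmaSubtype u.1).symm
  have hnbr : (completeMultipartiteGraph V).neighborFinset u =
      ({w | ¬ w.1 = u.1} : Finset (Σ i, V i)) := by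
    ext w
    simp [eq_comm]
  rw [← card_neighborFinset_eq_degree, hnbr, hpart, add_comm,
    Finset.card_filter_add_card_filter_not, Finset.card_univ, Fintype.card_sigma]

theorem degree_completeMultipartiteGraph_le [DecidableRel (completeMultipartiteGraph V).Adj]
    {u w : Σ i, V i} (h : Fintype.card (V u.1) ≤ Fintype.card (V w.1)) :
    (completeMultipartiteGraph V).degree w ≤ (completeMultipartiteGraph V).degree u := by
  have hu := degree_completeMultipartiteGraph_add_card u
  have hw := degree_completeMultipartiteGraph_add_card w
  omega

theorem srd_completeMultipartiteGraph {x u : Σ i, V i} (hux : u ≠ x)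
    (hx : ∀ w : Σ i, V i, Fintype.card (V x.1) ≤ Fintype.card (V w.1))
    (hu : ∀ w : Σ i, V i, w ≠ x → Fintype.card (V u.1) ≤ Fintype.card (V w.1)) :
    srd (completeMultipartiteGraph V) = ∑ i, Fintype.card (V i) - Fintype.card (V u.1) := by
  classical
  rw [srd_eq_degree (completeMultipartiteGraph.isCompleteMultipartite V) hux
    (fun w => degree_completeMultipartiteGraph_le (hx w))
    fun w hw => degree_completeMultipartiteGraph_le (hu w hw)]
  exact Nat.eq_sub_of_add_eq (degree_completeMultipartiteGraph_add_card u)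

end Parts

end CompleteMultipartite

theorem stmt8_general {ι : Type*} [Fintype ι] {V : ι → Type*} [∀ i, Fintype (V i)] {i j : ι}
    (hij : i ≠ j) (hi : ∀ l, Fintype.card (V i) ≤ Fintype.card (V l))
    (hj : ∀ l ≠ i, Fintype.card (V j) ≤ Fintype.card (V l)) :
    (Fintype.card (V i) = 1 →
      srd (completeMultipartiteGraph V) = ∑ l, Fintype.card (V l) - Fintype.card (V j)) ∧
    (2 ≤ Fintype.card (V i) →
      srd (completeMultipartiteGraph V) = ∑ l, Fintype.card (V l) - Fintype.card (V i)) := by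
  constructor
  · intro hone
    obtain ⟨x, hx⟩ := Fintype.card_eq_one_iff.1 hone
    obtain ⟨u⟩ : Nonempty (V j) := Fintype.card_pos_iff.1 (by have := hi j; omega)
    refine srd_completeMultipartiteGraph (x := ⟨i, x⟩) (u := ⟨j, u⟩) (by simp [hij.symm])
      (fun w => hi w.1) ?_
    rintro ⟨l, w⟩ hw
    refine hj l ?_
    rintro rfl
    exact hw (by rw [hx w])
  · intro htwo
    obtain ⟨x, u, hxu⟩ := Fintype.exists_pair_of_one_lt_card htwo
    exact srd_completeMultipartiteGraph (x := ⟨i, x⟩) (u := ⟨i, u⟩) (by simpa using hxu.symm)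
      (fun w => hi w.1) fun w _ => hi w.1

theorem stmt8 (k : ℕ) (hk : 2 ≤ k) (n : Fin k → ℕ) (hpos : ∀ i, 1 ≤ n i)
    (hmono : Monotone n) :
    (n ⟨0, by omega⟩ = 1 →
      srd (SimpleGraph.completeMultipartiteGraph (fun i => Fin (n i))) =
        (∑ i, n i) - n ⟨1, by omega⟩) ∧
    (2 ≤ n ⟨0, by omega⟩ →
      srd (SimpleGraph.completeMultipartiteGraph (fun i => Fin (n i))) =
        (∑ i, n i) - n ⟨0, by omega⟩) := by
  simpa using stmt8_general (V := fun i => Fin (n i)) (i := ⟨0, by omega⟩) (j := ⟨1, by omega⟩)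
    (by simp) (fun l => by simpa using hmono (Nat.zero_le l.1))
    fun l hl => by simpa using hmono (Nat.pos_of_ne_zero (Fin.val_ne_of_ne hl))
end
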